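/- Let R be a commutative ring, let k ≥ 2 and n ≥ 1, and let T : (Fin n)^k → R be an order-k tensor of format n × ⋯ × n. Suppose there exist subsets U_1, …, U_k ⊆ Fin n such that T(u_1, …, u_k) = 0 whenever u_j ∈ U_j for every j ∈ {1,…,k}, and such that |U_1| > Σ_{j=2}^{k} (n − |U_j|). Then the combinatorial hyperdeterminant of T is zero. -/

import Mathlib

/-- The combinatorial hyperdeterminant of an order-`k` tensor `T` of format `n × ⋯ × n`:
`det T = Σ_{σ₂,…,σ_k ∈ S_n} sign(σ₂)⋯sign(σ_k) Π_{i} T(i, σ₂(i), …, σ_k(i))`.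
We sum over tuples `σ : Fin k → Perm (Fin n)` whose first component is the identity. -/
noncomputable def hyperdet {R : Type*} [CommRing R] {k n : ℕ} [NeZero k]
    (T : (Fin k → Fin n) → R) : R :=
  ∑ σ ∈ Finset.univ.filter (fun σ : Fin k → Equiv.Perm (Fin n) => σ 0 = 1),
    (∏ j, (Equiv.Perm.sign (σ j) : ℤ)) • ∏ i : Fin n, T (fun j => σ j i)

open Finset

section Pigeonhole

variable {α ι : Type*}

theorem card_filter_notMem_le_card_compl {β : Type*} [Fintype β] [DecidableEq β]
    {f : α → β} {s : Finset α} (hf : Set.InjOn f s) (t : Finset β) :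
    #{a ∈ s | f a ∉ t} ≤ #tᶜ :=
  card_le_card_of_injOn f (fun _ ha => mem_coe.2 <| mem_compl.2 (mem_filter.1 ha).2)
    (hf.mono <| coe_subset.2 <| filter_subset _ s)

theorem exists_mem_forall_apply_mem_of_sum_card_compl_lt {β : ι → Type*} [∀ j, Fintype (β j)]
    [∀ j, DecidableEq (β j)] {J : Finset ι} {s : Finset α} {f : ∀ j, α → β j}
    (hf : ∀ j ∈ J, Set.InjOn (f j) s) {t : ∀ j, Finset (β j)} (hst : ∑ j ∈ J, #(t j)ᶜ < #s) :
    ∃ a ∈ s, ∀ j ∈ J, f j a ∈ t j := by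
  classical
  let bad : Finset α := J.biUnion fun j => {a ∈ s | f j a ∉ t j}
  have card_bad_lt : #bad < #s :=
    calc #bad ≤ ∑ j ∈ J, #{a ∈ s | f j a ∉ t j} := card_biUnion_le
      _ ≤ ∑ j ∈ J, #(t j)ᶜ :=
        sum_le_sum fun j hj => card_filter_notMem_le_card_compl (hf j hj) (t j)
      _ < #s := hst
  obtain ⟨a, has, ha_not_bad⟩ := exists_mem_notMem_of_card_lt_card card_bad_lt
  refine ⟨a, has, fun j hj => ?_⟩
  by_contra hat
  exact ha_not_bad (mem_biUnion.2 ⟨j, hj, mem_filter.2 ⟨has, hat⟩⟩)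

end Pigeonhole

theorem hyperdet_eq_zero_of_forall_exists_eq_zero {R : Type*} [CommRing R] {k n : ℕ} [NeZero k]
    {T : (Fin k → Fin n) → R}
    (hT : ∀ σ : Fin k → Equiv.Perm (Fin n), σ 0 = 1 → ∃ i, T (fun j => σ j i) = 0) :
    hyperdet T = 0 := by
  refine sum_eq_zero fun σ hσ => ?_
  obtain ⟨i, hi⟩ := hT σ (mem_filter.1 hσ).2
  rw [prod_eq_zero (mem_univ i) hi, smul_zero]

/-- If an order-`k` tensor `T` (`k ≥ 2`, `n ≥ 1`) vanishes on all index
tuples `(u₁,…,u_k)` with `u_j ∈ U_j` for all `j`, and `|U₁| > Σ_{j≥2} (n − |U_j|)`, then the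
combinatorial hyperdeterminant of `T` is zero. -/
theorem stmt9 {R : Type*} [CommRing R] (k n : ℕ) [NeZero k] (hk : 2 ≤ k) (hn : 1 ≤ n)
    (T : (Fin k → Fin n) → R) (U : Fin k → Finset (Fin n))
    (hzero : ∀ u : Fin k → Fin n, (∀ j, u j ∈ U j) → T u = 0)
    (hcard : ∑ j ∈ Finset.univ.erase (0 : Fin k), (n - (U j).card) < (U 0).card) :
    hyperdet T = 0 := by
  refine hyperdet_eq_zero_of_forall_exists_eq_zero fun σ hσ => ?_
  obtain ⟨i, hi, hσi⟩ : ∃ i ∈ U 0, ∀ j ∈ univ.erase 0, σ j i ∈ U j :=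
    exists_mem_forall_apply_mem_of_sum_card_compl_lt (fun j _ => (σ j).injective.injOn)
      (by simpa only [card_compl, Fintype.card_fin] using hcard)
  refine ⟨i, hzero _ fun j => ?_⟩
  obtain rfl | hj := eq_or_ne j 0
  · rwa [hσ, Equiv.Perm.one_apply]
  · exact hσi j (mem_erase.2 ⟨hj, mem_univ j⟩)
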